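/- Let G be a finite simple graph containing a vertex v of degree 5, and let v₁, v₂, v₃ be three distinct neighbors of v such that v₁v₂ and v₂v₃ are edges of G, v₁ and v₃ are not adjacent, deg(v₁) = deg(v₃) = 5 and deg(v₂) = 4. If G − {v, v₁, v₂, v₃} is (3,1)-decomposable, then G is (3,1)-decomposable. (This is Case 1 of Lemma 2.3(1), the configuration of two adjacent (4,5,5)-triangles sharing the edge vv₂ with the 4-vertex in the middle.) -/

import Mathlib

/-!
The edges `v v₁` and `v₂ v₃` form a matching outside the reduced graph, so together with the old
bounded-degree part they still have maximum degree at most `h`. Once they are removed from `G`, the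
four vertices can be put back in the order `v₃, v₁, v, v₂`, each having at most `d` earlier
neighbours: `v₃` and `v₁` do not yet see `v` and `v₂`, then `v` does not yet see `v₂` and has lost
`v v₁`, and finally `v₂` has lost `v₂ v₃`.
-/

open SimpleGraph

/-- A graph `H` is `d`-degenerate: every induced subgraph on a nonempty vertex set
has a vertex of degree at most `d` (within that induced subgraph). -/
def Degenerate {V : Type*} (d : ℕ) (H : SimpleGraph V) : Prop :=
  ∀ s : Set V, s.Nonempty → ∃ v ∈ s, (H.neighborSet v ∩ s).ncard ≤ d

/-- The graph `H` has maximum degree at most `h`. -/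
def MaxDegreeLE {V : Type*} (h : ℕ) (H : SimpleGraph V) : Prop :=
  ∀ v : V, (H.neighborSet v).ncard ≤ h

/-- A graph `G` is `(d,h)`-decomposable: its edge set is partitioned into the edge
sets of two spanning subgraphs `H₁` and `H₂`, where `H₁` is `d`-degenerate and
`H₂` has maximum degree at most `h`. -/
def Decomposable {V : Type*} (d h : ℕ) (G : SimpleGraph V) : Prop :=
  ∃ H₁ H₂ : SimpleGraph V, H₁ ⊔ H₂ = G ∧ Disjoint H₁ H₂ ∧
    Degenerate d H₁ ∧ MaxDegreeLE h H₂

section MaxDegree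

variable {V W : Type*} {h k : ℕ} {H K : SimpleGraph V}

theorem MaxDegreeLE.mono (hH : MaxDegreeLE h H) (hhk : h ≤ k) : MaxDegreeLE k H :=
  fun x ↦ (hH x).trans hhk

theorem maxDegreeLE_edge (a b : V) : MaxDegreeLE 1 (edge a b) := by
  intro x
  have hsub : ((edge a b).neighborSet x).Subsingleton := by
    intro y hy z hz
    rw [mem_neighborSet, edge_adj] at hy hz
    grind
  obtain hempty | ⟨y, hy⟩ := hsub.eq_empty_or_singleton
  · simp only [hempty, Set.ncard_empty, zero_le]
  · simp only [hy, Set.ncard_singleton, le_refl]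

theorem support_edge_subset (a b : V) : (edge a b).support ⊆ {a, b} := by
  rintro x ⟨y, hxy⟩
  exact ((edge_adj ..).1 hxy).1.imp And.left And.left

theorem support_sup : (H ⊔ K).support = H.support ∪ K.support := by
  ext x
  simp only [mem_support, sup_adj, exists_or, Set.mem_union]

theorem MaxDegreeLE.sup_of_disjoint_support (hH : MaxDegreeLE h H) (hK : MaxDegreeLE h K)
    (hHK : Disjoint H.support K.support) : MaxDegreeLE h (H ⊔ K) := by
  intro x
  rw [neighborSet_sup]
  by_cases hx : x ∈ H.support
  · rw [((notMem_support_iff_isIsolated _).1 (hHK.notMem_of_mem_left hx)).neighborSet_eq_empty,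
      Set.union_empty]
    exact hH x
  · rw [((notMem_support_iff_isIsolated _).1 hx).neighborSet_eq_empty, Set.empty_union]
    exact hK x

theorem MaxDegreeLE.map (hH : MaxDegreeLE h H) (f : V ↪ W) : MaxDegreeLE h (H.map f) := by
  intro y
  by_cases hy : y ∈ (H.map f).support
  · obtain ⟨x, -, rfl⟩ := (support_map f H).subset hy
    rw [neighborSet_map, Set.ncard_image_of_injective _ f.injective]
    exact hH x
  · rw [((notMem_support_iff_isIsolated _).1 hy).neighborSet_eq_empty, Set.ncard_empty]
    exact zero_le

end MaxDegree

section Degenerate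

variable {V : Type*} {d : ℕ} {G H : SimpleGraph V} {S : Set V}

theorem degenerate_induce_iff :
    Degenerate d (H.induce S) ↔
      ∀ s ⊆ S, s.Nonempty → ∃ x ∈ s, (H.neighborSet x ∩ s).ncard ≤ d := by
  have ncard_eq (t : Set S) (x : S) : ((H.induce S).neighborSet x ∩ t).ncard =
      (H.neighborSet x ∩ Subtype.val '' t).ncard := by
    rw [← Set.ncard_image_of_injective _ Subtype.val_injective, Set.inter_comm,
      Set.inter_comm _ (_ '' _), ← Set.image_inter_preimage]
    rfl
  constructor
  · intro hdeg s hsS hs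
    lift s to Set S using hsS
    obtain ⟨x, hx, hcard⟩ := hdeg s hs.of_image
    exact ⟨x, Set.mem_image_of_mem _ hx, (ncard_eq s x).symm.trans_le hcard⟩
  · intro hdeg t ht
    obtain ⟨_, ⟨x, hx, rfl⟩, hcard⟩ := hdeg _ (Subtype.coe_image_subset S t) (ht.image _)
    exact ⟨x, hx, (ncard_eq t x).trans_le hcard⟩

theorem degenerate_induce_univ_iff : Degenerate d (H.induce Set.univ) ↔ Degenerate d H := by
  rw [degenerate_induce_iff]
  simp only [Set.subset_univ, true_imp_iff, Degenerate]

theorem Degenerate.induce_insert {x : V} (hS : Degenerate d (H.induce S))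
    (hx : (H.neighborSet x ∩ S).encard ≤ d) : Degenerate d (H.induce (insert x S)) := by
  rw [degenerate_induce_iff] at hS ⊢
  intro s hsS hs
  by_cases hxs : x ∈ s
  · have hsub : H.neighborSet x ∩ s ⊆ H.neighborSet x ∩ S := fun y ⟨hxy, hys⟩ ↦
      ⟨hxy, (hsS hys).resolve_left hxy.ne'⟩
    have hle : (H.neighborSet x ∩ s).encard ≤ d := (Set.encard_le_encard hsub).trans hx
    exact ⟨x, hxs, (Set.encard_le_coe_iff_finite_ncard_le.1 hle).2⟩
  · exact hS s ((Set.subset_insert_iff_of_notMem hxs).1 hsS) hs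

theorem encard_neighborSet_inter_le {x : V} {t : Set V} (hHG : H ≤ G) (ht : t.Finite)
    (htG : t ⊆ G.neighborSet x) (htS : ∀ y ∈ t, y ∈ S → ¬ H.Adj x y)
    (hdeg : (G.neighborSet x).encard ≤ d + t.encard) : (H.neighborSet x ∩ S).encard ≤ d := by
  have hsub : H.neighborSet x ∩ S ⊆ G.neighborSet x \ t := fun y ⟨hxy, hyS⟩ ↦
    ⟨hHG hxy, fun hyt ↦ htS y hyt hyS hxy⟩
  rw [← Set.encard_sdiff_add_encard_of_subset htG,
    ENat.add_le_add_iff_right ht.encard_lt_top.ne] at hdeg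
  exact (Set.encard_le_encard hsub).trans hdeg

theorem Degenerate.of_induce_adjacent_triangles {v v₁ v₂ v₃ : V} (hHG : H ≤ G)
    (hadj1 : G.Adj v v₁) (hadj2 : G.Adj v v₂) (hadj3 : G.Adj v v₃)
    (h12 : G.Adj v₁ v₂) (h23 : G.Adj v₂ v₃) (hne13 : v₁ ≠ v₃)
    (hv : (G.neighborSet v).encard ≤ d + 2) (hd1 : (G.neighborSet v₁).encard ≤ d + 2)
    (hd2 : (G.neighborSet v₂).encard ≤ d + 1) (hd3 : (G.neighborSet v₃).encard ≤ d + 2)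
    (hH1 : ¬ H.Adj v v₁) (hH23 : ¬ H.Adj v₂ v₃)
    (hH : Degenerate d (H.induce {u | u ≠ v ∧ u ≠ v₁ ∧ u ≠ v₂ ∧ u ≠ v₃})) :
    Degenerate d H := by
  set S : Set V := {u | u ≠ v ∧ u ≠ v₁ ∧ u ≠ v₂ ∧ u ≠ v₃} with hS
  have hcover : insert v₂ (insert v (insert v₁ (insert v₃ S))) = Set.univ := by
    ext u
    simp only [hS, Set.mem_insert_iff, Set.mem_ofPred_eq, Set.mem_univ, iff_true]
    tauto
  have back_le {x a b : V} {T : Set V} (hxa : G.Adj x a) (hxb : G.Adj x b) (hab : a ≠ b)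
      (hx : (G.neighborSet x).encard ≤ d + 2) (ha : a ∈ T → ¬ H.Adj x a) (hb : b ∉ T) :
      (H.neighborSet x ∩ T).encard ≤ d :=
    encard_neighborSet_inter_le hHG (Set.toFinite {a, b}) (Set.pair_subset hxa hxb)
      (by rintro y (rfl | rfl) hy; exacts [ha hy, absurd hy hb])
      (by rwa [Set.encard_pair hab])
  have peel_v₃ : (H.neighborSet v₃ ∩ S).encard ≤ d :=
    back_le hadj3.symm h23.symm hadj2.ne hd3 (by simp [hS]) (by simp [hS])
  have peel_v₁ : (H.neighborSet v₁ ∩ insert v₃ S).encard ≤ d :=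
    back_le hadj1.symm h12 hadj2.ne hd1 (by simp [hS, hadj3.ne]) (by simp [hS, h23.ne])
  have peel_v : (H.neighborSet v ∩ insert v₁ (insert v₃ S)).encard ≤ d :=
    back_le hadj1 hadj2 h12.ne hv (fun _ ↦ hH1) (by simp [hS, h12.ne', h23.ne])
  have peel_v₂ : (H.neighborSet v₂ ∩ insert v (insert v₁ (insert v₃ S))).encard ≤ d :=
    encard_neighborSet_inter_le hHG (Set.finite_singleton v₃) (Set.singleton_subset_iff.2 h23)
      (by rintro y rfl _; exact hH23) (by rwa [Set.encard_singleton])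
  rw [← degenerate_induce_univ_iff, ← hcover]
  exact (((hH.induce_insert peel_v₃).induce_insert peel_v₁).induce_insert peel_v).induce_insert
    peel_v₂

end Degenerate

theorem induce_sdiff_spanningCoe_sup {V : Type*} {G M : SimpleGraph V} {S : Set V}
    {K₁ K₂ : SimpleGraph S} (hsup : K₁ ⊔ K₂ = G.induce S) (hdisj : Disjoint K₁ K₂)
    (hM : Disjoint M.support S) :
    (G \ (K₂.spanningCoe ⊔ M)).induce S = K₁ := by
  have hsdiff : K₁ = G.induce S \ K₂ := by rw [← hsup, sup_sdiff_right_self, hdisj.sdiff_eq_left]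
  ext x y
  have hMx : ¬ M.Adj x y := fun h ↦ hM.notMem_of_mem_left ⟨y, h⟩ x.2
  simp [hsdiff, hMx]

theorem Decomposable.of_induce {V : Type*} {d h : ℕ} {G M : SimpleGraph V} {S : Set V}
    (hMG : M ≤ G) (hM : MaxDegreeLE h M) (hMS : Disjoint M.support S)
    (hextend : ∀ H ≤ G \ M, Degenerate d (H.induce S) → Degenerate d H)
    (hdec : Decomposable d h (G.induce S)) : Decomposable d h G := by
  obtain ⟨K₁, K₂, hsup, hdisj, hK₁, hK₂⟩ := hdec
  have hK₂G : K₂.spanningCoe ≤ G := (map_le_iff_le_comap _ _ _).2 (le_sup_right.trans_eq hsup)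
  have hK₂S : K₂.spanningCoe.support ⊆ S :=
    (support_spanningCoe K₂).trans_subset (Subtype.coe_image_subset S _)
  refine ⟨G \ (K₂.spanningCoe ⊔ M), K₂.spanningCoe ⊔ M, sdiff_sup_cancel (sup_le hK₂G hMG),
    disjoint_sdiff_self_left, ?_, ?_⟩
  · refine hextend _ (sdiff_le_sdiff_left le_sup_right) ?_
    rwa [induce_sdiff_spanningCoe_sup hsup hdisj hMS]
  · exact (hK₂.map _).sup_of_disjoint_support hM (hMS.symm.mono_left hK₂S)

theorem stmt_2_general {V : Type*} {d h : ℕ} {G : SimpleGraph V} {v v₁ v₂ v₃ : V} (hh : 1 ≤ h)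
    (hv : (G.neighborSet v).encard ≤ d + 2) (hne13 : v₁ ≠ v₃)
    (hadj1 : G.Adj v v₁) (hadj2 : G.Adj v v₂) (hadj3 : G.Adj v v₃)
    (h12 : G.Adj v₁ v₂) (h23 : G.Adj v₂ v₃)
    (hd1 : (G.neighborSet v₁).encard ≤ d + 2) (hd3 : (G.neighborSet v₃).encard ≤ d + 2)
    (hd2 : (G.neighborSet v₂).encard ≤ d + 1)
    (hdec : Decomposable d h (G.induce {u : V | u ≠ v ∧ u ≠ v₁ ∧ u ≠ v₂ ∧ u ≠ v₃})) :
    Decomposable d h G := by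
  have hdisj : Disjoint (edge v v₁).support (edge v₂ v₃).support := by
    refine Set.disjoint_of_subset (support_edge_subset v v₁) (support_edge_subset v₂ v₃) ?_
    simp [hadj2.ne', hadj3.ne', h12.ne', hne13.symm]
  have hM : MaxDegreeLE 1 (edge v v₁ ⊔ edge v₂ v₃) :=
    (maxDegreeLE_edge v v₁).sup_of_disjoint_support (maxDegreeLE_edge v₂ v₃) hdisj
  refine hdec.of_induce (M := edge v v₁ ⊔ edge v₂ v₃)
    (sup_le ((edge_le_iff G).2 (.inr hadj1)) ((edge_le_iff G).2 (.inr h23))) (hM.mono hh) ?_ ?_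
  · rw [support_sup, Set.disjoint_union_left]
    constructor <;> refine Set.disjoint_of_subset_left (support_edge_subset _ _) ?_ <;> simp
  · intro H hH hdeg
    refine hdeg.of_induce_adjacent_triangles (hH.trans sdiff_le) hadj1 hadj2 hadj3 h12 h23
      hne13 hv hd1 hd2 hd3 (fun hadj ↦ (hH hadj).2 ?_) (fun hadj ↦ (hH hadj).2 ?_)
    · exact .inl ((edge_adj ..).2 ⟨.inl ⟨rfl, rfl⟩, hadj.ne⟩)
    · exact .inr ((edge_adj ..).2 ⟨.inl ⟨rfl, rfl⟩, hadj.ne⟩)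

theorem stmt_2 {V : Type*} [Fintype V] (G : SimpleGraph V) (v v₁ v₂ v₃ : V)
    (hv : (G.neighborSet v).ncard = 5)
    (hne12 : v₁ ≠ v₂) (hne13 : v₁ ≠ v₃) (hne23 : v₂ ≠ v₃)
    (hadj1 : G.Adj v v₁) (hadj2 : G.Adj v v₂) (hadj3 : G.Adj v v₃)
    (h12 : G.Adj v₁ v₂) (h23 : G.Adj v₂ v₃) (h13 : ¬ G.Adj v₁ v₃)
    (hd1 : (G.neighborSet v₁).ncard = 5) (hd3 : (G.neighborSet v₃).ncard = 5)
    (hd2 : (G.neighborSet v₂).ncard = 4)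
    (hdec : Decomposable 3 1 (G.induce {u : V | u ≠ v ∧ u ≠ v₁ ∧ u ≠ v₂ ∧ u ≠ v₃})) :
    Decomposable 3 1 G := by
  have encard_eq {x : V} {n : ℕ} (hx : (G.neighborSet x).ncard = n) :
      (G.neighborSet x).encard = n := hx ▸ (Set.toFinite _).cast_ncard_eq.symm
  exact stmt_2_general le_rfl (encard_eq hv).le hne13 hadj1 hadj2 hadj3 h12 h23
    (encard_eq hd1).le (encard_eq hd3).le (encard_eq hd2).le hdec
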